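/- arXiv:2212.06670 — 2 statements merged into one kernel-verified Lean document; each statement's English description precedes it below -/
import Mathlib

section
/- The identity element lies in the σ₀-twisted conjugacy class of w_{1,0}·w_0 in each of the following cases, i.e., in each case there exists x ∈ W with w_{1,0}·w_0 = x·σ₀(x)⁻¹: (a) W of type D_n (n ≥ 4) and σ₀ the diagram automorphism exchanging s_{n−1} and s_n and fixing the other simple reflections; (b) W of type D_4 and σ₀ the triality diagram automorphism sending s_1 ↦ s_3 ↦ s_4 ↦ s_1 and fixing s_2; (c) W of type E_6 and σ₀ the diagram automorphism exchanging s_1 ↔ s_6 and s_3 ↔ s_5 and fixing s_2 and s_4. -/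
noncomputable section

/-- The Coxeter matrix of type `Dₙ` with Bourbaki labels: the simple reflections
`s_1, …, s_n` correspond to the indices `0, …, n-1`; there are bonds of order `3`
between consecutive indices `0,…,n-2` (the chain `s_1 — s_2 — ⋯ — s_{n-1}`) and between
the indices `n-3` and `n-1` (the bond `s_{n-2} — s_n`). -/
def CoxeterMatrixD (n : ℕ) : CoxeterMatrix (Fin n) where
  M := Matrix.of fun i j : Fin n ↦
    if i = j then 1
    else if (((i : ℕ) + 1 = j ∨ (j : ℕ) + 1 = i) ∧ (i : ℕ) + 1 ≠ n ∧ (j : ℕ) + 1 ≠ n)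
        ∨ ((i : ℕ) + 3 = n ∧ (j : ℕ) + 1 = n) ∨ ((j : ℕ) + 3 = n ∧ (i : ℕ) + 1 = n)
      then 3 else 2
  isSymm := by
    unfold Matrix.IsSymm
    ext i j
    simp only [Matrix.transpose_apply, Matrix.of_apply]
    rcases eq_or_ne i j with h | h
    · simp [h]
    · rw [if_neg h.symm, if_neg h]
      congr 1
      apply propext
      tauto
  diagonal := by intro i; simp
  off_diagonal := by
    intro i j h
    simp only [Matrix.of_apply, if_neg h]
    split <;> omega

/-- The Weyl group of type `Dₙ`, given by its Coxeter presentation. -/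
abbrev WD (n : ℕ) := (CoxeterMatrixD n).Group

/-- The canonical Coxeter system of type `Dₙ`. -/
def csD (n : ℕ) : CoxeterSystem (CoxeterMatrixD n) (WD n) :=
  (CoxeterMatrixD n).toCoxeterSystem

/-- `segD n a b` is the product `s_a s_{a+1} ⋯ s_b` (Bourbaki labels). -/
def segD (n a b : ℕ) : WD n :=
  (((List.finRange n).filter fun k : Fin n => a ≤ (k : ℕ) + 1 ∧ (k : ℕ) + 1 ≤ b).map
    (csD n).simple).prod

/-- The standard parabolic subgroup of the type-`Dₙ` Weyl group generated by all simple
reflections except the one with (zero-based) index `i`. -/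
def paraD (n : ℕ) (i : Fin n) : Subgroup (WD n) :=
  Subgroup.closure ((csD n).simple '' {j : Fin n | j ≠ i})

open CoxeterMatrix

/-- The Weyl group of type `E₆`, given by its Coxeter presentation; the index `j : Fin 6`
corresponds to the Bourbaki label `j + 1`. -/
abbrev WE6 := (E₆).Group

/-- The canonical Coxeter system of type `E₆`. -/
def csE6 : CoxeterSystem E₆ WE6 := (E₆).toCoxeterSystem

/-- The standard parabolic subgroup of the type-`E₆` Weyl group generated by all simple
reflections except the one with (zero-based) index `i`. -/
def paraE6 (i : Fin 6) : Subgroup WE6 :=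
  Subgroup.closure (csE6.simple '' {j : Fin 6 | j ≠ i})

/-!
A simply laced Coxeter group acts on its root lattice, and `j` is a right descent of `w` exactly
when `w α_j` is negative. Hence an element all of whose simple reflections are descents is the
longest element `w₀`. Suppose that `t` maps all simple roots but one to simple roots different
from `α₁`. If `t ≠ 1`, the image of the remaining simple root is negative and involves `α₁`. Since
`w₁⁻¹` makes the simple roots of its parabolic subgroup negative and does not change the
coefficient of `α₁`, the product `w₁⁻¹ t` makes every simple root negative. So `w₁ w₀ = t`, and it
remains to exhibit an `x` for which `t = x σ₀(x)⁻¹` is of this kind. In type `Dₙ` this is the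
product `s₁ ⋯ s_{n-2} s_{n-1}` of the reflections along the chain of the diagram, which shifts the
simple roots of the chain by one place, as does `σ₀(x) = s₁ ⋯ s_{n-2} s_n` on the chain ending
in the other fork end.
-/

section RootRepresentation

/-- A Coxeter matrix is simply laced if any two distinct simple reflections commute or
satisfy the braid relation of length three. -/
class IsSimplyLaced {B : Type*} (M : CoxeterMatrix B) : Prop where
  eq_two_or_eq_three : ∀ ⦃i j : B⦄, i ≠ j → M i j = 2 ∨ M i j = 3

/-- The Cartan integer `-2 cos (π / m)` of two simple roots whose reflections have a product of
order `m`, for `m ∈ {1, 2, 3}`. Other values of `m`, where the integer is set to `0`, do not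
occur in a simply laced Coxeter matrix. -/
def cartanInteger : ℕ → ℤ
  | 1 => 2
  | 3 => -1
  | _ => 0

variable {B : Type*}

/-- The simple root `α i`, as a basis vector of the root lattice `B →₀ ℤ`. -/
def simpleRoot (i : B) : B →₀ ℤ := Finsupp.single i 1

/-- The simple coroot `α i ^∨`, as a linear form on the root lattice. -/
def simpleCoroot (M : CoxeterMatrix B) (i : B) : Module.Dual ℤ (B →₀ ℤ) :=
  Finsupp.linearCombination ℤ fun j => cartanInteger (M i j)

theorem simpleRoot_nonneg (i : B) : 0 ≤ simpleRoot i :=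
  Finsupp.single_nonneg.2 zero_le_one

theorem simpleRoot_ne_zero (i : B) : simpleRoot i ≠ 0 :=
  Finsupp.single_ne_zero.2 one_ne_zero

theorem smul_simpleRoot (n : ℤ) (i : B) : n • simpleRoot i = Finsupp.single i n :=
  Finsupp.smul_single_one i n

theorem simpleCoroot_simpleRoot (M : CoxeterMatrix B) (i j : B) :
    simpleCoroot M i (simpleRoot j) = cartanInteger (M i j) := by
  simp [simpleCoroot, simpleRoot]

theorem simpleRoot_injective : Function.Injective (simpleRoot : B → B →₀ ℤ) :=
  Finsupp.single_left_injective one_ne_zero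

theorem linearMap_ext_simpleRoot {N : Type*} [AddCommGroup N] {f g : (B →₀ ℤ) →ₗ[ℤ] N}
    (h : ∀ i, f (simpleRoot i) = g (simpleRoot i)) : f = g :=
  Finsupp.lhom_ext' fun i => LinearMap.ext_ring (h i)

theorem linearMap_nonpos_of_simpleRoot {N : Type*} [AddCommGroup N] [PartialOrder N]
    [IsOrderedAddMonoid N] {f : (B →₀ ℤ) →ₗ[ℤ] N} (hf : ∀ i, f (simpleRoot i) ≤ 0) {v : B →₀ ℤ}
    (hv : 0 ≤ v) : f v ≤ 0 := by
  rw [← v.sum_single, map_finsuppSum]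
  refine Finset.sum_nonpos fun i _ => ?_
  beta_reduce
  rw [← smul_simpleRoot, map_smul]
  exact smul_nonpos_of_nonneg_of_nonpos (hv i) (hf i)

theorem isLiftable_of_mul_self_of_braid {G : Type*} [Monoid G] {M : CoxeterMatrix B} {f : B → G}
    (hself : ∀ i, f i * f i = 1)
    (hbraid : ∀ i j, i ≠ j → M i j = 2 ∧ f i * f j = f j * f i ∨
      M i j = 3 ∧ f i * f j * f i = f j * f i * f j) : M.IsLiftable f := by
  intro i j
  obtain rfl | hij := eq_or_ne i j
  · simp [hself]
  · rcases hbraid i j hij with ⟨hM, h⟩ | ⟨hM, h⟩ <;> rw [hM]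
    · calc (f i * f j) ^ 2 = f i * f j * (f i * f j) := pow_two _
        _ = f j * (f i * f i) * f j := by simp only [h, mul_assoc]
        _ = 1 := by rw [hself, mul_one, hself]
    · calc (f i * f j) ^ 3 = f i * f j * f i * (f j * f i * f j) := by
            simp only [pow_succ, pow_zero, one_mul, mul_assoc]
        _ = f j * f i * (f j * f j) * f i * f j := by simp only [h, mul_assoc]
        _ = 1 := by rw [hself, mul_one, mul_assoc (f j), hself, mul_one, hself]

variable {M : CoxeterMatrix B}

theorem isLiftable_preReflection (M : CoxeterMatrix B) [IsSimplyLaced M] :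
    M.IsLiftable fun i => Module.preReflection (simpleRoot i) (simpleCoroot M i) := by
  have coroot_self (i : B) : simpleCoroot M i (simpleRoot i) = 2 := by
    rw [simpleCoroot_simpleRoot, M.diagonal, cartanInteger]
  refine isLiftable_of_mul_self_of_braid (fun i => LinearMap.ext fun v => ?_) fun i j hij => ?_
  · rw [Module.End.mul_apply, Module.End.one_apply]
    exact Module.involutive_preReflection (coroot_self i) v
  refine (IsSimplyLaced.eq_two_or_eq_three hij).imp (fun h => ⟨h, LinearMap.ext fun v => ?_⟩)
    fun h => ⟨h, LinearMap.ext fun v => ?_⟩ <;>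
  · simp only [Module.End.mul_apply, Module.preReflection_apply, map_sub, map_smul,
      coroot_self, simpleCoroot_simpleRoot, M.symmetric j i, h, cartanInteger]
    module

variable {W : Type*} [Group W] (cs : CoxeterSystem M W) [IsSimplyLaced M]

/-- The geometric representation of a simply laced Coxeter group on its root lattice. -/
def rootRep : Representation ℤ W (B →₀ ℤ) :=
  cs.lift ⟨_, isLiftable_preReflection M⟩

theorem rootRep_simple (i : B) (v : B →₀ ℤ) :
    rootRep cs (cs.simple i) v = v - simpleCoroot M i v • simpleRoot i := by
  rw [rootRep, cs.lift_apply_simple, Module.preReflection_apply]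

theorem rootRep_simple_simpleRoot (i j : B) :
    rootRep cs (cs.simple i) (simpleRoot j) =
      simpleRoot j - cartanInteger (M i j) • simpleRoot i := by
  rw [rootRep_simple, simpleCoroot_simpleRoot]

theorem rootRep_simple_simpleRoot_self (i : B) :
    rootRep cs (cs.simple i) (simpleRoot i) = -simpleRoot i := by
  rw [rootRep_simple_simpleRoot, M.diagonal, cartanInteger]
  module

variable {cs}

theorem rootRep_simple_simpleRoot_of_eq_two {i j : B} (h : M i j = 2) :
    rootRep cs (cs.simple i) (simpleRoot j) = simpleRoot j := by
  rw [rootRep_simple_simpleRoot, h, cartanInteger, zero_smul, sub_zero] <;> simp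

theorem rootRep_simple_simpleRoot_of_eq_three {i j : B} (h : M i j = 3) :
    rootRep cs (cs.simple i) (simpleRoot j) = simpleRoot j + simpleRoot i := by
  rw [rootRep_simple_simpleRoot, h, cartanInteger, neg_one_smul, sub_neg_eq_add]

theorem rootRep_simple_mul_simple_simpleRoot {i j : B} (h : M i j = 3) :
    rootRep cs (cs.simple i * cs.simple j) (simpleRoot i) = simpleRoot j := by
  rw [map_mul, Module.End.mul_apply,
    rootRep_simple_simpleRoot_of_eq_three ((M.symmetric j i).trans h), map_add,
    rootRep_simple_simpleRoot_self, rootRep_simple_simpleRoot_of_eq_three h]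
  abel

theorem rootRep_mul_simple_simpleRoot_self (w : W) (i : B) :
    rootRep cs (w * cs.simple i) (simpleRoot i) = -rootRep cs w (simpleRoot i) := by
  rw [map_mul, Module.End.mul_apply, rootRep_simple_simpleRoot_self, map_neg]

end RootRepresentation

section Descents

variable {B W : Type*} [Group W] {M : CoxeterMatrix B} (cs : CoxeterSystem M W)

theorem simple_mul_simple_of_eq_two {i j : B} (h : M i j = 2) :
    cs.simple i * cs.simple j = cs.simple j * cs.simple i := by
  simpa [CoxeterSystem.braidWord, CoxeterSystem.alternatingWord, CoxeterSystem.wordProd_cons, h,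
    M.symmetric j i] using (cs.wordProd_braidWord_eq i j)

theorem simple_mul_simple_mul_simple_of_eq_three {i j : B} (h : M i j = 3) :
    cs.simple i * cs.simple j * cs.simple i = cs.simple j * cs.simple i * cs.simple j := by
  simpa [CoxeterSystem.braidWord, CoxeterSystem.alternatingWord, CoxeterSystem.wordProd_cons, h,
    M.symmetric j i, mul_assoc] using (cs.wordProd_braidWord_eq i j).symm

variable {cs}

theorem not_isRightDescent_of_eq_two {u : W} {i j : B} (h : M i j = 2)
    (hi : ¬ cs.IsRightDescent u i) (hj : ¬ cs.IsRightDescent (u * cs.simple i) j) :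
    ¬ cs.IsRightDescent u j := by
  rw [cs.not_isRightDescent_iff] at hi hj
  intro hu
  rw [cs.isRightDescent_iff] at hu
  have hcomm : u * cs.simple i * cs.simple j = u * cs.simple j * cs.simple i := by
    rw [mul_assoc, simple_mul_simple_of_eq_two cs h, mul_assoc]
  have := cs.length_mul_simple (u * cs.simple j) i
  rw [hcomm] at hj
  omega

theorem not_isRightDescent_of_eq_three {v : W} {i j : B} (h : M i j = 3)
    (hj : ¬ cs.IsRightDescent v j) (hi : ¬ cs.IsRightDescent (v * cs.simple j) i)
    (hji : ¬ cs.IsRightDescent (v * cs.simple j * cs.simple i) j) :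
    ¬ cs.IsRightDescent v i := by
  rw [cs.not_isRightDescent_iff] at hj hi hji
  intro hv
  rw [cs.isRightDescent_iff] at hv
  have hbraid : v * cs.simple j * cs.simple i * cs.simple j =
      v * cs.simple i * cs.simple j * cs.simple i := by
    simpa only [mul_assoc] using
      congrArg (v * ·) (simple_mul_simple_mul_simple_of_eq_three cs h).symm
  have := cs.length_mul_simple (v * cs.simple i) j
  have := cs.length_mul_simple (v * cs.simple i * cs.simple j) i
  rw [hbraid] at hji
  omega

theorem exists_eq_mul_simple {w : W} {i : B} (hi : cs.IsRightDescent w i) :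
    ∃ u, w = u * cs.simple i ∧ ¬ cs.IsRightDescent u i ∧ cs.length u < cs.length w :=
  ⟨w * cs.simple i, by simp, cs.isRightDescent_iff_not_isRightDescent_mul.1 hi, hi⟩

variable [IsSimplyLaced M]

theorem rootRep_simpleRoot_nonneg {w : W} {j : B} (hj : ¬ cs.IsRightDescent w j) :
    0 ≤ rootRep cs w (simpleRoot j) := by
  induction hn : cs.length w using Nat.strong_induction_on generalizing w j with
  | _ n ih =>
  subst hn
  obtain rfl | hw := eq_or_ne w 1
  · rw [map_one, Module.End.one_apply]
    exact simpleRoot_nonneg j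
  obtain ⟨i, hi⟩ := cs.exists_rightDescent_of_ne_one hw
  have hij : i ≠ j := by rintro rfl; exact hj hi
  obtain ⟨u, rfl, hui, hu⟩ := exists_eq_mul_simple hi
  rw [map_mul, Module.End.mul_apply]
  rcases IsSimplyLaced.eq_two_or_eq_three (M := M) hij with h | h
  · rw [rootRep_simple_simpleRoot_of_eq_two h]
    exact ih _ hu (not_isRightDescent_of_eq_two h hui hj) rfl
  · by_cases huj : cs.IsRightDescent u j
    · obtain ⟨v, rfl, hvj, hv⟩ := exists_eq_mul_simple huj
      rw [← Module.End.mul_apply, ← map_mul, mul_assoc, map_mul, Module.End.mul_apply,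
        rootRep_simple_mul_simple_simpleRoot ((M.symmetric j i).trans h)]
      exact ih _ (hv.trans hu) (not_isRightDescent_of_eq_three h hvj hui hj) rfl
    · rw [rootRep_simple_simpleRoot_of_eq_three h, map_add]
      exact add_nonneg (ih _ hu huj rfl) (ih _ hu hui rfl)

theorem rootRep_simpleRoot_nonpos {w : W} {j : B} (hj : cs.IsRightDescent w j) :
    rootRep cs w (simpleRoot j) ≤ 0 := by
  obtain ⟨u, rfl, hu, -⟩ := exists_eq_mul_simple hj
  rw [rootRep_mul_simple_simpleRoot_self, neg_nonpos]
  exact rootRep_simpleRoot_nonneg hu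

theorem isRightDescent_of_rootRep_apply_neg {w : W} {j k : B}
    (h : rootRep cs w (simpleRoot j) k < 0) : cs.IsRightDescent w j := by
  by_contra hj
  exact h.not_ge (rootRep_simpleRoot_nonneg hj k)

theorem rootRep_mul_inv_of_eq {x y : W} {u v v' : B →₀ ℤ} (hx : rootRep cs x u = v)
    (hy : rootRep cs y u = v') : rootRep cs (x * y⁻¹) v' = v := by
  rw [map_mul, Module.End.mul_apply, ← hy, Representation.inv_self_apply, hx]

theorem rootRep_injective (w : W) : Function.Injective (rootRep cs w) :=
  Function.LeftInverse.injective ((rootRep cs).inv_self_apply w)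

theorem rootRep_simpleRoot_ne_zero (w : W) (j : B) : rootRep cs w (simpleRoot j) ≠ 0 := fun h =>
  simpleRoot_ne_zero j (rootRep_injective w (h.trans (map_zero _).symm))

theorem isRightDescent_iff_rootRep_nonpos {w : W} {j : B} :
    cs.IsRightDescent w j ↔ rootRep cs w (simpleRoot j) ≤ 0 := by
  refine ⟨rootRep_simpleRoot_nonpos, fun h => ?_⟩
  by_contra hj
  exact rootRep_simpleRoot_ne_zero w j (h.antisymm (rootRep_simpleRoot_nonneg hj))

theorem not_isRightDescent_of_rootRep_eq {w : W} {j k : B}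
    (h : rootRep cs w (simpleRoot j) = simpleRoot k) : ¬ cs.IsRightDescent w j := fun hj =>
  simpleRoot_ne_zero k <|
    ((h ▸ isRightDescent_iff_rootRep_nonpos.1 hj).antisymm (simpleRoot_nonneg k))

theorem ne_one_of_rootRep_eq {w : W} {j k : B}
    (h : rootRep cs w (simpleRoot j) = simpleRoot k) (hjk : j ≠ k) : w ≠ 1 := by
  rintro rfl
  rw [map_one, Module.End.one_apply] at h
  exact hjk (simpleRoot_injective h)

end Descents

section LongestElements

variable {B W : Type*} [Group W] {M : CoxeterMatrix B} {cs : CoxeterSystem M W}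

theorem isRightDescent_of_length_le {P : Subgroup W} {w : W} {i : B} (hw : w ∈ P)
    (hi : cs.simple i ∈ P) (hmax : ∀ v ∈ P, cs.length v ≤ cs.length w) : cs.IsRightDescent w i :=
  lt_of_le_of_ne (hmax _ (P.mul_mem hw hi)) (cs.length_mul_simple_ne w i)

theorem isRightDescent_of_forall_not {t : W} {i : B} (ht : t ≠ 1)
    (h : ∀ j ≠ i, ¬ cs.IsRightDescent t j) : cs.IsRightDescent t i := by
  obtain ⟨j, hj⟩ := cs.exists_rightDescent_of_ne_one ht
  obtain rfl | hji := eq_or_ne j i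
  · exact hj
  · exact absurd hj (h j hji)

variable [IsSimplyLaced M]

theorem eq_of_forall_isRightDescent {w₀ w : W} (hw₀ : ∀ v, cs.length v ≤ cs.length w₀)
    (hw : ∀ j, cs.IsRightDescent w j) : w = w₀ := by
  have inv_nonpos (j : B) : rootRep cs w₀⁻¹ (simpleRoot j) ≤ 0 := by
    refine rootRep_simpleRoot_nonpos (isRightDescent_of_length_le (P := ⊤) trivial trivial ?_)
    simpa using hw₀
  suffices w₀⁻¹ * w = 1 from (inv_mul_eq_one.1 this).symm
  by_contra hne
  obtain ⟨j, hj⟩ := cs.exists_rightDescent_of_ne_one hne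
  have nonneg : 0 ≤ rootRep cs (w₀⁻¹ * w) (simpleRoot j) := by
    rw [map_mul, Module.End.mul_apply, ← neg_nonpos, ← map_neg]
    exact linearMap_nonpos_of_simpleRoot inv_nonpos
      (neg_nonneg.2 (rootRep_simpleRoot_nonpos (hw j)))
  exact rootRep_simpleRoot_ne_zero _ j ((rootRep_simpleRoot_nonpos hj).antisymm nonneg)

theorem rootRep_apply_of_mem_closure {J : Set B} {w : W}
    (hw : w ∈ Subgroup.closure (cs.simple '' J)) {k : B} (hk : k ∉ J) (v : B →₀ ℤ) :
    rootRep cs w v k = v k := by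
  induction hw using Subgroup.closure_induction generalizing v with
  | mem _ h =>
    obtain ⟨j, hj, rfl⟩ := h
    have hjk : j ≠ k := ne_of_mem_of_not_mem hj hk
    simp [rootRep_simple, simpleRoot, hjk]
  | one => simp
  | mul _ _ _ _ ihx ihy => rw [map_mul, Module.End.mul_apply, ihx, ihy]
  | inv _ _ ih => rw [← ih, Representation.self_inv_apply]

theorem rootRep_apply_ne_zero {t : W} {i₀ i₁ : B}
    (ht : ∀ j ≠ i₁, rootRep cs t (simpleRoot j) i₀ = 0) :
    rootRep cs t (simpleRoot i₁) i₀ ≠ 0 := by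
  intro hi₁
  have vanish : (Finsupp.lapply i₀).comp (rootRep cs t) = 0 := by
    refine linearMap_ext_simpleRoot fun j => ?_
    obtain rfl | hj := eq_or_ne j i₁
    · exact hi₁
    · exact ht j hj
  have := LinearMap.congr_fun vanish (rootRep cs t⁻¹ (simpleRoot i₀))
  simp [simpleRoot] at this

theorem mul_eq_of_rootRep_eq_simpleRoot {w₀ w₁ t : W} {i₀ i₁ : B}
    (hw₀ : ∀ v, cs.length v ≤ cs.length w₀)
    (hw₁ : w₁ ∈ Subgroup.closure (cs.simple '' {j | j ≠ i₀}))
    (hmax : ∀ v ∈ Subgroup.closure (cs.simple '' {j | j ≠ i₀}), cs.length v ≤ cs.length w₁)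
    (ht : t ≠ 1) (hperm : ∀ j ≠ i₁, ∃ k ≠ i₀, rootRep cs t (simpleRoot j) = simpleRoot k) :
    w₁ * w₀ = t := by
  suffices w₁⁻¹ * t = w₀ by rw [← this, mul_inv_cancel_left]
  refine eq_of_forall_isRightDescent hw₀ fun j => ?_
  obtain rfl | hj := eq_or_ne j i₁
  · have hdesc : cs.IsRightDescent t j := isRightDescent_of_forall_not ht fun k hk =>
      let ⟨_, _, h⟩ := hperm k hk
      not_isRightDescent_of_rootRep_eq h
    have hne : rootRep cs t (simpleRoot j) i₀ ≠ 0 := rootRep_apply_ne_zero fun k hk => by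
      obtain ⟨l, hl, h⟩ := hperm k hk
      rw [h, simpleRoot, Finsupp.single_eq_of_ne hl.symm]
    refine isRightDescent_of_rootRep_apply_neg (k := i₀) ?_
    rw [map_mul, Module.End.mul_apply, rootRep_apply_of_mem_closure (inv_mem hw₁) (by simp)]
    exact (rootRep_simpleRoot_nonpos hdesc i₀).lt_of_ne hne
  · obtain ⟨k, hk, h⟩ := hperm j hj
    rw [isRightDescent_iff_rootRep_nonpos, map_mul, Module.End.mul_apply, h]
    refine rootRep_simpleRoot_nonpos (isRightDescent_of_length_le (inv_mem hw₁)
      (Subgroup.subset_closure ⟨k, hk, rfl⟩) ?_)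
    simpa using hmax

end LongestElements

section Paths

variable {B W : Type*} [Group W] {M : CoxeterMatrix B} (cs : CoxeterSystem M W)

/-- The product `s (a 0) * s (a 1) * ⋯ * s (a (k - 1))`. -/
def pathProd (a : ℕ → B) (k : ℕ) : W := cs.wordProd ((List.range k).map a)

theorem pathProd_succ (a : ℕ → B) (k : ℕ) :
    pathProd cs a (k + 1) = pathProd cs a k * cs.simple (a k) := by
  simp [pathProd, List.range_succ, cs.wordProd_append]

/-- The first `k` terms of the sequence `a` form an induced path of the Coxeter diagram, that is,
a subdiagram of type `A`. -/
structure IsPath (M : CoxeterMatrix B) (a : ℕ → B) (k : ℕ) : Prop where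
  eq_three : ∀ ⦃i⦄, i + 1 < k → M (a i) (a (i + 1)) = 3
  eq_two : ∀ ⦃i j⦄, i + 1 < j → j < k → M (a i) (a j) = 2

theorem IsPath.of_succ {a : ℕ → B} {k : ℕ} (ha : IsPath M a (k + 1)) : IsPath M a k :=
  ⟨fun _ h => ha.eq_three (by omega), fun _ _ h h' => ha.eq_two h (by omega)⟩

variable {cs}

theorem map_pathProd {σ : MulAut W} {a b : ℕ → B}
    (h : ∀ i, σ (cs.simple (a i)) = cs.simple (b i)) (k : ℕ) :
    σ (pathProd cs a k) = pathProd cs b k := by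
  simp [pathProd, CoxeterSystem.wordProd, map_list_prod, Function.comp_def, h]

variable [IsSimplyLaced M]

theorem rootRep_pathProd_of_eq_two {a : ℕ → B} {k : ℕ} {b : B} (h : ∀ i < k, M (a i) b = 2) :
    rootRep cs (pathProd cs a k) (simpleRoot b) = simpleRoot b := by
  induction k with
  | zero => simp [pathProd]
  | succ k ih =>
    rw [pathProd_succ, map_mul, Module.End.mul_apply,
      rootRep_simple_simpleRoot_of_eq_two (h k k.lt_succ_self), ih fun i hi => h i (by omega)]

theorem rootRep_pathProd_simpleRoot {a : ℕ → B} {k : ℕ} (ha : IsPath M a k) {j : ℕ}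
    (hj : j + 1 < k) :
    rootRep cs (pathProd cs a k) (simpleRoot (a j)) = simpleRoot (a (j + 1)) := by
  induction k with
  | zero => omega
  | succ k ih =>
    obtain hjk | rfl := (Nat.lt_succ_iff.1 hj).lt_or_eq
    · rw [pathProd_succ, map_mul, Module.End.mul_apply, rootRep_simple_simpleRoot_of_eq_two
        ((M.symmetric _ _).trans (ha.eq_two hjk k.lt_succ_self)), ih ha.of_succ hjk]
    · rw [pathProd_succ, pathProd_succ, mul_assoc, map_mul, Module.End.mul_apply,
        rootRep_simple_mul_simple_simpleRoot (ha.eq_three hj),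
        rootRep_pathProd_of_eq_two fun i hi => ha.eq_two (by omega) hj]

theorem rootRep_pathProd_mul_inv {a b : ℕ → B} {k : ℕ} (ha : IsPath M a k) (hb : IsPath M b k)
    {j : ℕ} (hj : j + 1 < k) (hab : a j = b j) :
    rootRep cs (pathProd cs a k * (pathProd cs b k)⁻¹) (simpleRoot (b (j + 1))) =
      simpleRoot (a (j + 1)) :=
  rootRep_mul_inv_of_eq (hab ▸ rootRep_pathProd_simpleRoot ha hj)
    (rootRep_pathProd_simpleRoot hb hj)

end Paths

section TypeD

theorem coxeterMatrixD_apply {n : ℕ} (i j : Fin n) : CoxeterMatrixD n i j =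
    if i = j then 1
    else if (((i : ℕ) + 1 = j ∨ (j : ℕ) + 1 = i) ∧ (i : ℕ) + 1 ≠ n ∧ (j : ℕ) + 1 ≠ n)
        ∨ ((i : ℕ) + 3 = n ∧ (j : ℕ) + 1 = n) ∨ ((j : ℕ) + 3 = n ∧ (i : ℕ) + 1 = n)
      then 3 else 2 := rfl

instance isSimplyLaced_coxeterMatrixD (n : ℕ) : IsSimplyLaced (CoxeterMatrixD n) where
  eq_two_or_eq_three i j hij := by
    rw [coxeterMatrixD_apply, if_neg hij]
    split_ifs <;> simp

variable {m : ℕ}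

/-- The indices `0, …, m` of the diagram of type `D` of rank `m + 3`, followed by one end `e` of
its fork. -/
def forkPath (e : Fin (m + 3)) (i : ℕ) : Fin (m + 3) :=
  if h : i ≤ m then ⟨i, by omega⟩ else e

theorem forkPath_of_le (e : Fin (m + 3)) {i : ℕ} (hi : i ≤ m) : forkPath e i = ⟨i, by omega⟩ :=
  dif_pos hi

theorem forkPath_of_lt (e : Fin (m + 3)) {i : ℕ} (hi : m < i) : forkPath e i = e :=
  dif_neg hi.not_ge

theorem isPath_forkPath {e : Fin (m + 3)} (he : m < e) :
    IsPath (CoxeterMatrixD (m + 3)) (forkPath e) (m + 2) where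
  eq_three i hi := by
    rw [forkPath_of_le e (by omega : i ≤ m), coxeterMatrixD_apply]
    by_cases him : i + 1 ≤ m
    · rw [forkPath_of_le e him, if_neg (by simp), if_pos (by dsimp only; omega)]
    · rw [forkPath_of_lt e (by omega), if_neg (by simp only [Fin.ext_iff]; omega),
        if_pos (by dsimp only; omega)]
  eq_two i j hij hj := by
    rw [forkPath_of_le e (by omega : i ≤ m), coxeterMatrixD_apply]
    by_cases hjm : j ≤ m
    · rw [forkPath_of_le e hjm, if_neg (by simp only [Fin.ext_iff]; omega),
        if_neg (by dsimp only; omega)]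
    · rw [forkPath_of_lt e (by omega), if_neg (by simp only [Fin.ext_iff]; omega),
        if_neg (by dsimp only; omega)]

theorem exists_forkPath_succ_eq {j : Fin (m + 3)} (hj : j ≠ 0) :
    ∃ i ≤ m, forkPath ⟨m + 1, by omega⟩ (i + 1) = j ∨ forkPath (Fin.last (m + 2)) (i + 1) = j := by
  obtain ⟨j, hjlt⟩ := j
  obtain ⟨i, rfl⟩ := Nat.exists_eq_succ_of_ne_zero (fun h => hj (Fin.ext h) : j ≠ 0)
  obtain hi | rfl | rfl : i + 1 ≤ m ∨ i = m ∨ i = m + 1 := by omega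
  · exact ⟨i, by omega, .inl (forkPath_of_le _ hi)⟩
  · exact ⟨i, le_rfl, .inl (forkPath_of_lt _ i.lt_succ_self)⟩
  · exact ⟨m, le_rfl, .inr (forkPath_of_lt _ m.lt_succ_self)⟩

theorem pathProd_forkPath_mul_inv_comm {e f : Fin (m + 3)} (h : CoxeterMatrixD (m + 3) e f = 2) :
    pathProd (csD (m + 3)) (forkPath e) (m + 2) * (pathProd (csD (m + 3)) (forkPath f) (m + 2))⁻¹ =
      pathProd (csD (m + 3)) (forkPath f) (m + 2) *
        (pathProd (csD (m + 3)) (forkPath e) (m + 2))⁻¹ := by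
  have common : pathProd (csD (m + 3)) (forkPath e) (m + 1) =
      pathProd (csD (m + 3)) (forkPath f) (m + 1) := by
    refine congrArg _ (List.map_congr_left fun i hi => ?_)
    have him := Nat.lt_succ_iff.1 (List.mem_range.1 hi)
    rw [forkPath_of_le e him, forkPath_of_le f him]
  rw [pathProd_succ _ (forkPath e), pathProd_succ _ (forkPath f), common,
    forkPath_of_lt e m.lt_succ_self, forkPath_of_lt f m.lt_succ_self]
  simp only [mul_inv_rev, CoxeterSystem.inv_simple, mul_assoc]
  rw [← mul_assoc (CoxeterSystem.simple _ e), simple_mul_simple_of_eq_two _ h, mul_assoc]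

theorem rootRep_pathProd_forkPath_mul_inv {e f : Fin (m + 3)} (he : m < e) (hf : m < f) {i : ℕ}
    (hi : i ≤ m) :
    rootRep (csD (m + 3)) (pathProd (csD (m + 3)) (forkPath e) (m + 2) *
      (pathProd (csD (m + 3)) (forkPath f) (m + 2))⁻¹) (simpleRoot (forkPath f (i + 1))) =
        simpleRoot (forkPath e (i + 1)) :=
  rootRep_pathProd_mul_inv (isPath_forkPath he) (isPath_forkPath hf) (by omega)
    (by rw [forkPath_of_le e hi, forkPath_of_le f hi])

theorem forkPath_succ_ne_zero {e : Fin (m + 3)} (he : m < e) (i : ℕ) : forkPath e (i + 1) ≠ 0 := by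
  obtain hi | hi := le_or_gt (i + 1) m
  · rw [forkPath_of_le e hi]
    simp [Fin.ext_iff]
  · rw [forkPath_of_lt e hi]
    rintro rfl
    simp at he

theorem mul_eq_pathProd_forkPath_mul_inv {w₀ w₁ : WD (m + 3)}
    (hw₀ : ∀ v, (csD (m + 3)).length v ≤ (csD (m + 3)).length w₀)
    (hw₁ : w₁ ∈ paraD (m + 3) 0)
    (hmax : ∀ v ∈ paraD (m + 3) 0, (csD (m + 3)).length v ≤ (csD (m + 3)).length w₁) :
    w₁ * w₀ = pathProd (csD (m + 3)) (forkPath ⟨m + 1, by omega⟩) (m + 2) *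
      (pathProd (csD (m + 3)) (forkPath (Fin.last (m + 2))) (m + 2))⁻¹ := by
  have lt_penultimate : m < (⟨m + 1, by omega⟩ : Fin (m + 3)) := m.lt_succ_self
  have lt_last : m < Fin.last (m + 2) := by simp
  have commute : CoxeterMatrixD (m + 3) ⟨m + 1, by omega⟩ (Fin.last (m + 2)) = 2 := by
    simp [coxeterMatrixD_apply, Fin.ext_iff]
  refine mul_eq_of_rootRep_eq_simpleRoot (i₁ := 0) hw₀ hw₁ hmax ?_ fun j hj => ?_
  · refine ne_one_of_rootRep_eq
      (rootRep_pathProd_forkPath_mul_inv lt_penultimate lt_last le_rfl) ?_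
    simp [forkPath, Fin.ext_iff]
  · obtain ⟨i, hi, rfl | rfl⟩ := exists_forkPath_succ_eq hj
    · rw [pathProd_forkPath_mul_inv_comm commute]
      exact ⟨_, forkPath_succ_ne_zero lt_last i,
        rootRep_pathProd_forkPath_mul_inv lt_last lt_penultimate hi⟩
    · exact ⟨_, forkPath_succ_ne_zero lt_penultimate i,
        rootRep_pathProd_forkPath_mul_inv lt_penultimate lt_last hi⟩

theorem apply_simple_forkPath {σ : MulAut (WD (m + 3))} {e f : Fin (m + 3)}
    (hef : σ ((csD (m + 3)).simple e) = (csD (m + 3)).simple f)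
    (hfix : ∀ j : Fin (m + 3), (j : ℕ) ≤ m → σ ((csD (m + 3)).simple j) = (csD (m + 3)).simple j)
    (i : ℕ) :
    σ ((csD (m + 3)).simple (forkPath e i)) = (csD (m + 3)).simple (forkPath f i) := by
  obtain hi | hi := le_or_gt i m
  · rw [forkPath_of_le e hi, forkPath_of_le f hi]
    exact hfix _ hi
  · rw [forkPath_of_lt e hi, forkPath_of_lt f hi, hef]

end TypeD

section D4

theorem rootRep_csD_four_simple (i j : Fin 4) :
    rootRep (csD 4) ((csD 4).simple i) (simpleRoot j) =
      simpleRoot j - CartanMatrix.D 4 i j • simpleRoot i := by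
  rw [rootRep_simple_simpleRoot]
  fin_cases i <;> fin_cases j <;> rfl

theorem rootRep_wordProd_mul_inv_D_four {j : Fin 4} (hj : j ≠ 0) :
    rootRep (csD 4) ((csD 4).wordProd [0, 3, 1, 2] * ((csD 4).wordProd [2, 0, 1, 3])⁻¹)
      (simpleRoot j) = simpleRoot (![0, 1, 3, 2] j) := by
  let preimage : Fin 4 → Fin 4 →₀ ℤ :=
    ![0, simpleRoot 0 + simpleRoot 1 + simpleRoot 2 + simpleRoot 3,
      -(simpleRoot 1 + simpleRoot 2 + simpleRoot 3), simpleRoot 1]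
  refine rootRep_mul_inv_of_eq (u := preimage j) ?_ ?_ <;> fin_cases j <;>
    simp [preimage, CoxeterSystem.wordProd_cons, rootRep_csD_four_simple,
      CartanMatrix.D_four] at hj ⊢ <;> abel

theorem mul_eq_wordProd_mul_inv_D_four {w₀ w₁ : WD 4}
    (hw₀ : ∀ v, (csD 4).length v ≤ (csD 4).length w₀) (hw₁ : w₁ ∈ paraD 4 0)
    (hmax : ∀ v ∈ paraD 4 0, (csD 4).length v ≤ (csD 4).length w₁) :
    w₁ * w₀ = (csD 4).wordProd [0, 3, 1, 2] * ((csD 4).wordProd [2, 0, 1, 3])⁻¹ := by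
  refine mul_eq_of_rootRep_eq_simpleRoot (i₁ := 0) hw₀ hw₁ hmax ?_ fun j hj =>
    ⟨_, ?_, rootRep_wordProd_mul_inv_D_four hj⟩
  · exact ne_one_of_rootRep_eq (rootRep_wordProd_mul_inv_D_four (j := 2) (by decide)) (by decide)
  · fin_cases j <;> simp at hj ⊢

end D4

section E6

instance isSimplyLaced_E₆ : IsSimplyLaced E₆ where
  eq_two_or_eq_three i j := by
    fin_cases i <;> fin_cases j <;> simp [E₆]

theorem rootRep_csE6_simple (i j : Fin 6) :
    rootRep csE6 (csE6.simple i) (simpleRoot j) =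
      simpleRoot j - CartanMatrix.E₆ i j • simpleRoot i := by
  rw [rootRep_simple_simpleRoot]
  fin_cases i <;> fin_cases j <;> rfl

theorem rootRep_wordProd_mul_inv_E₆ {j : Fin 6} (hj : j ≠ 5) :
    rootRep csE6 (csE6.wordProd [0, 2, 3, 1, 4, 3, 2, 0] *
      (csE6.wordProd [5, 4, 3, 1, 2, 3, 4, 5])⁻¹) (simpleRoot j) =
        simpleRoot (![5, 2, 4, 3, 1, 0] j) := by
  let preimage : Fin 6 → Fin 6 →₀ ℤ :=
    ![simpleRoot 0 + simpleRoot 2 + simpleRoot 3 + simpleRoot 4 + simpleRoot 5,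
      simpleRoot 2, simpleRoot 1, simpleRoot 3, simpleRoot 4, 0]
  refine rootRep_mul_inv_of_eq (u := preimage j) ?_ ?_ <;> fin_cases j <;>
    simp [preimage, CoxeterSystem.wordProd_cons, rootRep_csE6_simple, CartanMatrix.E₆] at hj ⊢ <;>
    abel

theorem mul_eq_wordProd_mul_inv_E₆ {w₀ w₁ : WE6} (hw₀ : ∀ v, csE6.length v ≤ csE6.length w₀)
    (hw₁ : w₁ ∈ paraE6 0) (hmax : ∀ v ∈ paraE6 0, csE6.length v ≤ csE6.length w₁) :
    w₁ * w₀ = csE6.wordProd [0, 2, 3, 1, 4, 3, 2, 0] *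
      (csE6.wordProd [5, 4, 3, 1, 2, 3, 4, 5])⁻¹ := by
  refine mul_eq_of_rootRep_eq_simpleRoot (i₁ := 5) hw₀ hw₁ hmax ?_ fun j hj =>
    ⟨_, ?_, rootRep_wordProd_mul_inv_E₆ hj⟩
  · exact ne_one_of_rootRep_eq (rootRep_wordProd_mul_inv_E₆ (j := 0) (by decide)) (by decide)
  · fin_cases j <;> simp at hj ⊢

end E6

/-- The identity lies in the `σ₀`-twisted conjugacy class of
`w_{1,0}·w₀`, i.e. `w_{1,0}·w₀ = x·σ₀(x)⁻¹` for some `x ∈ W`, in each of the following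
cases: (a) `W` of type `Dₙ` (`n ≥ 4`) with `σ₀` the diagram automorphism exchanging
`s_{n−1}` and `s_n` and fixing the other simple reflections; (b) `W` of type `D₄` with
`σ₀` the triality diagram automorphism `s₁ ↦ s₃ ↦ s₄ ↦ s₁`, fixing `s₂`; (c) `W` of type
`E₆` with `σ₀` the diagram automorphism exchanging `s₁ ↔ s₆` and `s₃ ↔ s₅`, fixing `s₂`
and `s₄`.  (Bourbaki labels; zero-based indices in the formalization.) -/
theorem identity_mem_twisted_class_D_D4_E6 :
    -- (a) type `Dₙ`, `σ₀` exchanging the two fork ends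
    (∀ n : ℕ, ∀ _ : 4 ≤ n, ∀ σ₀ : MulAut (WD n),
      σ₀ ((csD n).simple ⟨n - 2, by omega⟩) = (csD n).simple ⟨n - 1, by omega⟩ →
      σ₀ ((csD n).simple ⟨n - 1, by omega⟩) = (csD n).simple ⟨n - 2, by omega⟩ →
      (∀ j : Fin n, (j : ℕ) + 2 ≠ n → (j : ℕ) + 1 ≠ n → σ₀ ((csD n).simple j) = (csD n).simple j) →
      ∀ w₀ : WD n, (∀ v : WD n, (csD n).length v ≤ (csD n).length w₀) →
      ∀ w₁ ∈ paraD n ⟨0, by omega⟩,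
        (∀ v ∈ paraD n ⟨0, by omega⟩, (csD n).length v ≤ (csD n).length w₁) →
        ∃ x : WD n, w₁ * w₀ = x * (σ₀ x)⁻¹) ∧
    -- (b) type `D₄`, triality
    (∀ σ₀ : MulAut (WD 4),
      σ₀ ((csD 4).simple 0) = (csD 4).simple 2 →
      σ₀ ((csD 4).simple 2) = (csD 4).simple 3 →
      σ₀ ((csD 4).simple 3) = (csD 4).simple 0 →
      σ₀ ((csD 4).simple 1) = (csD 4).simple 1 →
      ∀ w₀ : WD 4, (∀ v : WD 4, (csD 4).length v ≤ (csD 4).length w₀) →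
      ∀ w₁ ∈ paraD 4 0,
        (∀ v ∈ paraD 4 0, (csD 4).length v ≤ (csD 4).length w₁) →
        ∃ x : WD 4, w₁ * w₀ = x * (σ₀ x)⁻¹) ∧
    -- (c) type `E₆`
    (∀ σ₀ : MulAut WE6,
      σ₀ (csE6.simple 0) = csE6.simple 5 → σ₀ (csE6.simple 5) = csE6.simple 0 →
      σ₀ (csE6.simple 2) = csE6.simple 4 → σ₀ (csE6.simple 4) = csE6.simple 2 →
      σ₀ (csE6.simple 1) = csE6.simple 1 → σ₀ (csE6.simple 3) = csE6.simple 3 →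
      ∀ w₀ : WE6, (∀ v : WE6, csE6.length v ≤ csE6.length w₀) →
      ∀ w₁ ∈ paraE6 0,
        (∀ v ∈ paraE6 0, csE6.length v ≤ csE6.length w₁) →
        ∃ x : WE6, w₁ * w₀ = x * (σ₀ x)⁻¹) := by
  refine ⟨?_, ?_, ?_⟩
  · intro n hn σ₀ hswap _ hfix w₀ hw₀ w₁ hw₁ hmax
    obtain ⟨m, rfl⟩ : ∃ m, n = m + 3 := ⟨n - 3, by omega⟩
    have map_forkPath : ∀ i, σ₀ ((csD (m + 3)).simple (forkPath ⟨m + 1, by omega⟩ i)) =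
        (csD (m + 3)).simple (forkPath (Fin.last (m + 2)) i) :=
      apply_simple_forkPath hswap fun j hj => hfix j (by omega) (by omega)
    refine ⟨pathProd (csD (m + 3)) (forkPath ⟨m + 1, by omega⟩) (m + 2), ?_⟩
    rw [mul_eq_pathProd_forkPath_mul_inv hw₀ hw₁ hmax, map_pathProd map_forkPath]
  · intro σ₀ h0 h2 h3 h1 w₀ hw₀ w₁ hw₁ hmax
    refine ⟨(csD 4).wordProd [0, 3, 1, 2], ?_⟩
    rw [mul_eq_wordProd_mul_inv_D_four hw₀ hw₁ hmax]
    simp only [CoxeterSystem.wordProd, List.map_cons, List.map_nil, map_list_prod, h0, h1, h2, h3]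
  · intro σ₀ h0 _ h2 h4 h1 h3 w₀ hw₀ w₁ hw₁ hmax
    refine ⟨csE6.wordProd [0, 2, 3, 1, 4, 3, 2, 0], ?_⟩
    rw [mul_eq_wordProd_mul_inv_E₆ hw₀ hw₁ hmax]
    simp only [CoxeterSystem.wordProd, List.map_cons, List.map_nil, map_list_prod, h0, h1, h2, h3,
      h4]
end
end

section
/- Let W be the Weyl group of type A_n with simple reflections s_1, …, s_n labeled as in Bourbaki, and let σ₀ be the automorphism of W given by σ₀(x) = w_0·x·w_0 (the nontrivial diagram automorphism s_j ↦ s_{n+1−j}). Fix 1 ≤ i ≤ n. If n is even or i is even, then the identity element lies in the σ₀-twisted conjugacy class O_{σ₀}(w_{i,0}·w_0). If n and i are both odd, then the set of elements of minimal length in O_{σ₀}(w_{i,0}·w_0) is exactly {s_{(n+1)/2}}; in particular, the minimal length in this twisted class is 1. -/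
noncomputable section
open CoxeterMatrix

/-- The Weyl group of type `Aₙ`, given by its Coxeter presentation. -/
abbrev WA (n : ℕ) := (Aₙ n).Group

/-- The canonical Coxeter system of type `Aₙ`. -/
def csA (n : ℕ) : CoxeterSystem (Aₙ n) (WA n) := (Aₙ n).toCoxeterSystem

/-- `segA n a b` is the product `s_a s_{a+1} ⋯ s_b` of the simple reflections with
Bourbaki labels `a, a+1, …, b` (so `s_j`, `1 ≤ j ≤ n`, is `(csA n).simple ⟨j-1, _⟩`). -/
def segA (n a b : ℕ) : WA n :=
  (((List.finRange n).filter fun k : Fin n => a ≤ (k : ℕ) + 1 ∧ (k : ℕ) + 1 ≤ b).map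
    (csA n).simple).prod

/-- The standard parabolic subgroup of the type-`Aₙ` Weyl group generated by all simple
reflections except the one with (zero-based) index `i`. -/
def paraA (n : ℕ) (i : Fin n) : Subgroup (WA n) :=
  Subgroup.closure ((csA n).simple '' {j : Fin n | j ≠ i})

/-!
Multiplication by `w₀` on the right turns the twisted class of `w_{i,0} w₀` into the ordinary
conjugacy class of `w_{i,0}`, so an element `v` is in the twisted class iff `v w₀` is conjugate to
`w_{i,0}`. In the symmetric group on `0, …, n`, `w₀` reverses all the letters and `w_{i,0}` reverses
the blocks `0, …, i - 1` and `i, …, n`; both are involutions, and conjugacy of involutions is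
equality of their numbers of fixed points. Comparing these for `v = 1` gives the criterion for the
identity. For a simple reflection `s_j`, `s_j w₀` is an involution only if `s_j` commutes with `w₀`,
that is, if `j = (n + 1) / 2`.
-/

open Equiv Equiv.Perm Function SimpleGraph

section CoxeterSystem

variable {B W : Type*} [Group W] {M : CoxeterMatrix B} (cs : CoxeterSystem M W) {i j : B} {w : W}

theorem isRightDescent_of_length_mul_simple_le (h : cs.length (w * cs.simple i) ≤ cs.length w) :
    cs.IsRightDescent w i :=
  lt_of_le_of_ne h (cs.length_mul_simple_ne w i)

theorem commute_simple_of_eq_two (h : M i j = 2) : Commute (cs.simple i) (cs.simple j) := by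
  simpa [commute_iff_eq, CoxeterSystem.braidWord, M.symmetric j i, h,
    CoxeterSystem.alternatingWord, CoxeterSystem.wordProd_cons] using cs.wordProd_braidWord_eq i j

theorem simple_braid_of_eq_three (h : M i j = 3) :
    cs.simple i * cs.simple j * cs.simple i = cs.simple j * cs.simple i * cs.simple j := by
  simpa [CoxeterSystem.braidWord, M.symmetric j i, h, CoxeterSystem.alternatingWord,
    CoxeterSystem.wordProd_cons, mul_assoc] using (cs.wordProd_braidWord_eq i j).symm

theorem not_isRightDescent_mul_simple_of_eq_two (hij : M i j = 2) (hi : cs.IsRightDescent w i)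
    (hj : ¬cs.IsRightDescent w j) : ¬cs.IsRightDescent (w * cs.simple i) j := by
  have hcomm : w * cs.simple j = w * cs.simple i * cs.simple j * cs.simple i := by
    rw [mul_assoc w, (commute_simple_of_eq_two cs hij).eq, ← mul_assoc,
      cs.simple_mul_simple_cancel_right]
  have hlength := cs.length_mul_le (w * cs.simple i * cs.simple j) (cs.simple i)
  rw [← hcomm, cs.length_simple] at hlength
  rw [cs.isRightDescent_iff] at hi ⊢
  rw [cs.not_isRightDescent_iff] at hj
  omega

theorem not_isRightDescent_mul_simple_mul_simple_of_eq_three (hij : M i j = 3)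
    (hi : cs.IsRightDescent w i) (hj : ¬cs.IsRightDescent w j)
    (hij' : cs.IsRightDescent (w * cs.simple i) j) :
    ¬cs.IsRightDescent (w * cs.simple i * cs.simple j) i := by
  have hbraid : w * cs.simple j =
      w * cs.simple i * cs.simple j * cs.simple i * (cs.simple j * cs.simple i) := by
    calc w * cs.simple j
        = w * (cs.simple j * cs.simple i * cs.simple j * (cs.simple j * cs.simple i)) := by
          simp [mul_assoc]
      _ = _ := by rw [← simple_braid_of_eq_three cs hij]; simp only [mul_assoc]
  have hlength := cs.length_mul_le (w * cs.simple i * cs.simple j * cs.simple i)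
    (cs.simple j * cs.simple i)
  have hdihedral := cs.length_mul_le (cs.simple j) (cs.simple i)
  rw [cs.length_simple, cs.length_simple] at hdihedral
  rw [← hbraid] at hlength
  rw [cs.isRightDescent_iff] at hi hij' ⊢
  rw [cs.not_isRightDescent_iff] at hj
  omega

theorem exists_mul_simple_of_eq_three (hij : M i j = 3) (hi : cs.IsRightDescent w i)
    (hj : ¬cs.IsRightDescent w j) :
    ∃ v, cs.length v < cs.length w ∧ ¬cs.IsRightDescent v i ∧ ¬cs.IsRightDescent v j ∧
      (w = v * cs.simple i ∨ w = v * cs.simple j * cs.simple i) := by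
  by_cases hij' : cs.IsRightDescent (w * cs.simple i) j
  · exact ⟨w * cs.simple i * cs.simple j, lt_trans hij' hi,
      not_isRightDescent_mul_simple_mul_simple_of_eq_three cs hij hi hj hij',
      cs.isRightDescent_iff_not_isRightDescent_mul.1 hij', .inr (by simp)⟩
  · exact ⟨w * cs.simple i, hi, cs.isRightDescent_iff_not_isRightDescent_mul.1 hi, hij',
      .inl (by simp)⟩

theorem setOf_minimal_length_eq_singleton_simple {C : Set W} (h1 : 1 ∉ C)
    (hC : ∀ j, cs.simple j ∈ C ↔ j = i) :
    {v | v ∈ C ∧ ∀ v' ∈ C, cs.length v ≤ cs.length v'} = {cs.simple i} := by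
  have hpos : ∀ v ∈ C, 1 ≤ cs.length v := fun v hv =>
    Nat.one_le_iff_ne_zero.2 fun h => h1 (cs.length_eq_zero_iff.1 h ▸ hv)
  ext v
  simp only [Set.mem_ofPred_eq, Set.mem_singleton_iff]
  constructor
  · rintro ⟨hv, hmin⟩
    have hle := cs.length_simple i ▸ hmin _ ((hC i).2 rfl)
    obtain ⟨j, rfl⟩ := cs.length_eq_one_iff.1 (le_antisymm hle (hpos v hv))
    rw [(hC j).1 hv]
  · rintro rfl
    exact ⟨(hC i).2 rfl, fun v' hv' => cs.length_simple i ▸ hpos v' hv'⟩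

end CoxeterSystem

section TwistedConjugacy

variable {G H : Type*} [Group G] [Group H]

/-- The `φ`-twisted conjugacy class of `w`. -/
def twistedConjClass (φ : G → G) (w : G) : Set G := {v | ∃ x, v = x⁻¹ * w * φ x}

theorem mem_twistedConjClass_conj_iff {w₀ : G} (hw₀ : w₀ * w₀ = 1) (w v : G) :
    v ∈ twistedConjClass (fun x => w₀ * x * w₀) (w * w₀) ↔ IsConj w (v * w₀) := by
  have hcancel (x : G) : x⁻¹ * (w * w₀) * (w₀ * x * w₀) = x⁻¹ * w * x * w₀ := by
    calc x⁻¹ * (w * w₀) * (w₀ * x * w₀)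
        = x⁻¹ * w * (w₀ * w₀) * x * w₀ := by group
      _ = x⁻¹ * w * x * w₀ := by rw [hw₀, mul_one]
  have hshift (y : G) : v = y * w₀ ↔ y = v * w₀ := by
    rw [← mul_inv_eq_iff_eq_mul, inv_eq_of_mul_eq_one_left hw₀, eq_comm]
  rw [isConj_iff, (Equiv.inv G).surjective.exists]
  simp only [twistedConjClass, Set.mem_ofPred_eq, hcancel, hshift, Equiv.inv_apply, inv_inv]

theorem isConj_map_iff {f : G →* H} (hf : Bijective f) {a b : G} :
    IsConj (f a) (f b) ↔ IsConj a b := by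
  simp [isConj_iff, hf.surjective.exists, ← map_mul, ← map_inv, hf.injective.eq_iff]

end TwistedConjugacy

theorem isConj_iff_ncard_fixedPoints_eq {α : Type*} [Finite α] {p : ℕ}
    [Fact p.Prime] {σ τ : Perm α} (hσ : σ ^ p = 1) (hτ : τ ^ p = 1) :
    IsConj σ τ ↔ (fixedPoints σ).ncard = (fixedPoints τ).ncard := by
  classical
  cases nonempty_fintype α
  have hfixed (ρ : Perm α) (hρ : ρ ^ p = 1) :
      (fixedPoints ρ).ncard + ρ.cycleType.card * p = Fintype.card α := by
    have hsum : ρ.cycleType.sum = ρ.cycleType.card * p := by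
      conv_lhs => rw [cycleType_of_pow_prime_eq_one hρ, Multiset.sum_replicate, smul_eq_mul]
    have hle : ρ.cycleType.sum ≤ Fintype.card α := ρ.sum_cycleType_le
    rw [← Nat.card_coe_set_eq, Nat.card_eq_fintype_card, card_fixedPoints, ← hsum]
    omega
  rw [isConj_iff_cycleType_eq]
  have hσ' := hfixed σ hσ
  have hτ' := hfixed τ hτ
  constructor
  · intro h
    rw [h] at hσ'
    omega
  · intro h
    have : σ.cycleType.card * p = τ.cycleType.card * p := by omega
    rw [cycleType_of_pow_prime_eq_one hσ, cycleType_of_pow_prime_eq_one hτ,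
      Nat.eq_of_mul_eq_mul_right (Fact.out : p.Prime).pos this]

theorem perm_eq_one_of_strictMono {α : Type*} [LinearOrder α] [WellFoundedLT α] {σ : Perm α}
    (hσ : StrictMono σ) : σ = 1 := by
  have := Subsingleton.elim (hσ.orderIsoOfSurjective _ σ.surjective) (OrderIso.refl α)
  ext x
  exact DFunLike.congr_fun this x

section AdjSwap

variable {n : ℕ} {i j : Fin n}

theorem coxeterMatrixA_eq_three (hij : (pathGraph n).Adj i j) : CoxeterMatrix.A n i j = 3 :=
  (if_neg hij.ne).trans (if_pos (pathGraph_adj.1 hij).symm)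

theorem coxeterMatrixA_eq_two (hne : i ≠ j) (hij : ¬(pathGraph n).Adj i j) :
    CoxeterMatrix.A n i j = 2 :=
  (if_neg hne).trans (if_neg fun h => hij (pathGraph_adj.2 h.symm))

/-- The adjacent transposition `(j, j + 1)` of the letters `0, …, n`. -/
def adjSwap (j : Fin n) : Perm (Fin (n + 1)) := swap j.castSucc j.succ

theorem adjSwap_mul_self (j : Fin n) : adjSwap j * adjSwap j = 1 := swap_mul_self _ _

@[simp]
theorem adjSwap_apply_castSucc (j : Fin n) : adjSwap j j.castSucc = j.succ := swap_apply_left _ _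

@[simp]
theorem adjSwap_apply_succ (j : Fin n) : adjSwap j j.succ = j.castSucc := swap_apply_right _ _

theorem adjSwap_injective : Injective (adjSwap : Fin n → Perm (Fin (n + 1))) := by
  intro i j hij
  have := DFunLike.congr_fun hij i.castSucc
  simp only [adjSwap, swap_apply_def] at this
  grind

theorem disjoint_adjSwap (hne : i ≠ j) (hij : ¬(pathGraph n).Adj i j) :
    Disjoint (adjSwap i) (adjSwap j) := by
  intro x
  simp only [adjSwap, swap_apply_def]
  grind [pathGraph_adj]

theorem isThreeCycle_adjSwap_mul_adjSwap (hij : (pathGraph n).Adj i j) :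
    IsThreeCycle (adjSwap i * adjSwap j) := by
  rcases pathGraph_adj.1 hij with hij | hij
  · have hletter : i.succ = j.castSucc := Fin.ext hij
    rw [adjSwap, adjSwap, swap_comm i.castSucc, hletter]
    exact isThreeCycle_swap_mul_swap_same (by grind) (by grind) (by grind)
  · have hletter : i.castSucc = j.succ := Fin.ext hij.symm
    rw [adjSwap, adjSwap, swap_comm j.castSucc, hletter]
    exact isThreeCycle_swap_mul_swap_same (by grind) (by grind) (by grind)

theorem isLiftable_adjSwap (n : ℕ) : (CoxeterMatrix.A n).IsLiftable (adjSwap (n := n)) := by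
  intro i j
  rcases eq_or_ne i j with rfl | hne
  · rw [(CoxeterMatrix.A n).diagonal, pow_one, adjSwap_mul_self]
  by_cases hij : (pathGraph n).Adj i j
  · rw [coxeterMatrixA_eq_three hij, ← (isThreeCycle_adjSwap_mul_adjSwap hij).orderOf,
      pow_orderOf_eq_one]
  · rw [coxeterMatrixA_eq_two hne hij, (disjoint_adjSwap hne hij).commute.mul_pow, pow_two,
      pow_two, adjSwap_mul_self, adjSwap_mul_self, one_mul]

variable {σ : Perm (Fin (n + 1))}

theorem mul_adjSwap_lt_of_ne (hne : i ≠ j) (hi : σ i.castSucc < σ i.succ)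
    (hj : σ j.castSucc < σ j.succ) :
    (σ * adjSwap i) j.castSucc < (σ * adjSwap i) j.succ := by
  simp only [Perm.mul_apply, adjSwap, swap_apply_def]
  grind

theorem mul_adjSwap_mul_adjSwap_lt_of_adj (hij : (pathGraph n).Adj i j)
    (hi : σ i.castSucc < σ i.succ) :
    (σ * adjSwap j * adjSwap i) j.castSucc < (σ * adjSwap j * adjSwap i) j.succ := by
  simp only [Perm.mul_apply, adjSwap, swap_apply_def]
  grind [pathGraph_adj]

end AdjSwap

section PermA

variable {n : ℕ}

/-- The action of the Weyl group of type `Aₙ` on `n + 1` letters, in which the simple reflections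
act by adjacent transpositions. -/
def permA (n : ℕ) : WA n →* Perm (Fin (n + 1)) := (csA n).lift ⟨adjSwap, isLiftable_adjSwap n⟩

@[simp]
theorem permA_simple (j : Fin n) : permA n ((csA n).simple j) = adjSwap j :=
  (csA n).lift_apply_simple (isLiftable_adjSwap n) j

-- Induction on length: if `i` is a descent of `w` and `j` is not, then `w = v * u`, where `v` is
-- shorter, has neither descent, and so is increasing on the letters moved by `u ∈ ⟨sᵢ, sⱼ⟩`.
theorem permA_castSucc_lt_succ_of_not_isRightDescent {w : WA n} {j : Fin n}
    (hj : ¬(csA n).IsRightDescent w j) : permA n w j.castSucc < permA n w j.succ := by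
  induction hlength : (csA n).length w using Nat.strong_induction_on generalizing w j with
  | h l ih =>
    subst hlength
    rcases eq_or_ne w 1 with rfl | hw
    · simp
    obtain ⟨i, hi⟩ := (csA n).exists_rightDescent_of_ne_one hw
    have hne : i ≠ j := by rintro rfl; exact hj hi
    obtain ⟨v, hvw, hvi, hvj, hv⟩ : ∃ v, (csA n).length v < (csA n).length w ∧
        ¬(csA n).IsRightDescent v i ∧ ¬(csA n).IsRightDescent v j ∧
        (w = v * (csA n).simple i ∨
          (pathGraph n).Adj i j ∧ w = v * (csA n).simple j * (csA n).simple i) := by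
      by_cases hij : (pathGraph n).Adj i j
      · simpa [hij] using
          exists_mul_simple_of_eq_three (csA n) (coxeterMatrixA_eq_three hij) hi hj
      · exact ⟨w * (csA n).simple i, hi, (csA n).isRightDescent_iff_not_isRightDescent_mul.1 hi,
          not_isRightDescent_mul_simple_of_eq_two (csA n) (coxeterMatrixA_eq_two hne hij) hi hj,
          .inl (by simp)⟩
    have hσi := ih _ hvw hvi rfl
    have hσj := ih _ hvw hvj rfl
    rcases hv with rfl | ⟨hij, rfl⟩ <;> simp only [map_mul, permA_simple]
    · exact mul_adjSwap_lt_of_ne hne hσi hσj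
    · exact mul_adjSwap_mul_adjSwap_lt_of_adj hij hσi

theorem permA_succ_lt_castSucc_of_isRightDescent {w : WA n} {j : Fin n}
    (hj : (csA n).IsRightDescent w j) : permA n w j.succ < permA n w j.castSucc := by
  simpa using permA_castSucc_lt_succ_of_not_isRightDescent
    ((csA n).isRightDescent_iff_not_isRightDescent_mul.1 hj)

theorem permA_injective (n : ℕ) : Injective (permA n) := by
  refine (injective_iff_map_eq_one _).2 fun w hw => ?_
  by_contra hne
  obtain ⟨j, hj⟩ := (csA n).exists_rightDescent_of_ne_one hne
  have hlt := permA_succ_lt_castSucc_of_isRightDescent hj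
  rw [hw, Perm.one_apply, Perm.one_apply] at hlt
  exact hlt.not_gt j.castSucc_lt_succ

theorem permA_surjective (n : ℕ) : Surjective (permA n) := by
  rw [← MonoidHom.mrange_eq_top, eq_top_iff, ← mclosure_swap_castSucc_succ, Submonoid.closure_le]
  rintro _ ⟨j, rfl⟩
  exact ⟨_, permA_simple j⟩

theorem permA_bijective (n : ℕ) : Bijective (permA n) := ⟨permA_injective n, permA_surjective n⟩

end PermA

section BlockRev

variable {n : ℕ} {i k : Fin (n + 1)}

/-- The permutation of the letters `0, …, n` that reverses each of the blocks `0, …, i` and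
`i + 1, …, n`. -/
def blockRev (i : Fin (n + 1)) : Perm (Fin (n + 1)) :=
  Involutive.toPerm
    (fun x => if h : x ≤ i then ⟨i - x, by omega⟩ else ⟨n + 1 + i - x, by omega⟩) fun x => by grind

theorem val_blockRev_apply (i x : Fin (n + 1)) :
    (blockRev i x : ℕ) = if x ≤ i then (i - x : ℕ) else n + 1 + i - x := by
  change ((if h : x ≤ i then _ else _ : Fin (n + 1)) : ℕ) = _
  split_ifs <;> rfl

theorem blockRev_mul_self (i : Fin (n + 1)) : blockRev i * blockRev i = 1 := by
  ext x : 1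
  exact Involutive.toPerm_involutive _ x

theorem blockRev_sq (i : Fin (n + 1)) : blockRev i ^ 2 = 1 :=
  (pow_two _).trans (blockRev_mul_self i)

theorem blockRev_last_apply (x : Fin (n + 1)) : blockRev (Fin.last n) x = x.rev := by
  grind [val_blockRev_apply]

theorem eq_blockRev_of_succ_lt_castSucc {σ : Perm (Fin (n + 1))} (hblock : ∀ x, σ x ≤ i ↔ x ≤ i)
    (hσ : ∀ j : Fin n, j.castSucc ≠ i → σ j.succ < σ j.castSucc) : σ = blockRev i := by
  have hmono : StrictMono (blockRev i * σ) := Fin.strictMono_iff_lt_succ.2 fun j => by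
    simp only [Fin.lt_def, Perm.mul_apply, val_blockRev_apply, hblock]
    grind
  calc σ = blockRev i * (blockRev i * σ) := by rw [← mul_assoc, blockRev_mul_self, one_mul]
    _ = blockRev i := by rw [perm_eq_one_of_strictMono hmono, mul_one]

theorem ncard_setOf_two_mul_eq {N a : ℕ} (ha : a < 2 * N) :
    {x : Fin N | 2 * (x : ℕ) = a}.ncard = if Even a then 1 else 0 := by
  split_ifs with h
  · obtain ⟨b, rfl⟩ := h
    refine Set.ncard_eq_one.2 ⟨⟨b, by omega⟩, ?_⟩
    grind
  · rw [Set.ncard_eq_zero]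
    grind

theorem fixedPoints_blockRev (i : Fin (n + 1)) :
    fixedPoints (blockRev i) =
      {x : Fin (n + 1) | 2 * (x : ℕ) = i} ∪ {x : Fin (n + 1) | 2 * (x : ℕ) = n + 1 + i} := by
  ext x
  simp only [mem_fixedPoints, IsFixedPt, Fin.ext_iff, val_blockRev_apply]
  grind

theorem ncard_fixedPoints_blockRev (i : Fin (n + 1)) :
    (fixedPoints (blockRev i)).ncard = if Even n then 1 else if Even (i : ℕ) then 2 else 0 := by
  rw [fixedPoints_blockRev, Set.ncard_union_eq (by grind), ncard_setOf_two_mul_eq (by omega),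
    ncard_setOf_two_mul_eq (by omega)]
  grind

theorem isConj_blockRev_iff :
    IsConj (blockRev i) (blockRev k) ↔ Even n ∨ (Even (i : ℕ) ↔ Even (k : ℕ)) := by
  rw [isConj_iff_ncard_fixedPoints_eq (blockRev_sq i) (blockRev_sq k),
    ncard_fixedPoints_blockRev, ncard_fixedPoints_blockRev]
  grind

theorem blockRev_last_mul_adjSwap (j : Fin n) :
    blockRev (Fin.last n) * adjSwap j = adjSwap j.rev * blockRev (Fin.last n) := by
  rw [adjSwap, adjSwap, mul_swap_eq_swap_mul, blockRev_last_apply, blockRev_last_apply,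
    Fin.rev_castSucc, Fin.rev_succ, swap_comm]

theorem adjSwap_mul_blockRev_last_sq_eq_one_iff {j : Fin n} :
    (adjSwap j * blockRev (Fin.last n)) ^ 2 = 1 ↔ 2 * (j : ℕ) + 1 = n := by
  have hsq : (adjSwap j * blockRev (Fin.last n)) ^ 2 = adjSwap j * adjSwap j.rev := by
    calc (adjSwap j * blockRev (Fin.last n)) ^ 2
        = adjSwap j * (blockRev (Fin.last n) * adjSwap j) * blockRev (Fin.last n) := by
          simp only [pow_two, mul_assoc]
      _ = adjSwap j * adjSwap j.rev := by
          simp only [blockRev_last_mul_adjSwap, mul_assoc, blockRev_mul_self, mul_one]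
  rw [hsq, mul_eq_one_iff_eq_inv, inv_eq_of_mul_eq_one_left (adjSwap_mul_self _),
    adjSwap_injective.eq_iff]
  grind

theorem fixedPoints_adjSwap_mul_blockRev_last {j : Fin n} (hj : 2 * (j : ℕ) + 1 = n) :
    fixedPoints (adjSwap j * blockRev (Fin.last n)) = {j.castSucc, j.succ} := by
  ext x
  simp only [mem_fixedPoints, IsFixedPt, Perm.mul_apply, blockRev_last_apply, adjSwap,
    swap_apply_def]
  grind

theorem isConj_blockRev_adjSwap_mul_blockRev_last_iff (hn : Odd n) (hi : Even (i : ℕ))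
    {j : Fin n} :
    IsConj (blockRev i) (adjSwap j * blockRev (Fin.last n)) ↔ 2 * (j : ℕ) + 1 = n := by
  constructor
  · intro h
    obtain ⟨c, hc⟩ := isConj_iff.1 h
    rw [← adjSwap_mul_blockRev_last_sq_eq_one_iff, ← hc, conj_pow, blockRev_sq, mul_one,
      mul_inv_cancel]
  · intro hj
    rw [isConj_iff_ncard_fixedPoints_eq (blockRev_sq i)
      (adjSwap_mul_blockRev_last_sq_eq_one_iff.2 hj), ncard_fixedPoints_blockRev,
      if_neg (Nat.not_even_iff_odd.2 hn), if_pos hi, fixedPoints_adjSwap_mul_blockRev_last hj,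
      Set.ncard_pair j.castSucc_lt_succ.ne]

end BlockRev

section LongestElements

variable {n : ℕ} {w₀ w : WA n} {i : Fin n}

theorem permA_eq_blockRev_last (hw₀ : ∀ v : WA n, (csA n).length v ≤ (csA n).length w₀) :
    permA n w₀ = blockRev (Fin.last n) :=
  eq_blockRev_of_succ_lt_castSucc (fun x => by simp [Fin.le_last]) fun _ _ =>
    permA_succ_lt_castSucc_of_isRightDescent
      (isRightDescent_of_length_mul_simple_le (csA n) (hw₀ _))

theorem permA_apply_le_iff_of_mem_paraA (hw : w ∈ paraA n i) (x : Fin (n + 1)) :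
    permA n w x ≤ i.castSucc ↔ x ≤ i.castSucc := by
  induction hw using Subgroup.closure_induction generalizing x with
  | mem w hw =>
    obtain ⟨j, hj, rfl⟩ := hw
    rw [permA_simple, adjSwap, swap_apply_def]
    grind
  | one => rw [map_one, Perm.one_apply]
  | mul u v _ _ hu hv => rw [map_mul, Perm.mul_apply, hu, hv]
  | inv u _ hu => rw [← hu, map_inv, ← Perm.mul_apply, mul_inv_cancel, Perm.one_apply]

theorem permA_eq_blockRev_castSucc (hw : w ∈ paraA n i)
    (hmax : ∀ v ∈ paraA n i, (csA n).length v ≤ (csA n).length w) :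
    permA n w = blockRev i.castSucc :=
  eq_blockRev_of_succ_lt_castSucc (permA_apply_le_iff_of_mem_paraA hw) fun j hj =>
    permA_succ_lt_castSucc_of_isRightDescent <|
      isRightDescent_of_length_mul_simple_le (csA n) <|
        hmax _ (mul_mem hw (Subgroup.subset_closure ⟨j, by grind, rfl⟩))

theorem mem_twistedConjClass_iff_isConj_blockRev
    (hw₀ : ∀ v : WA n, (csA n).length v ≤ (csA n).length w₀) (hw : w ∈ paraA n i)
    (hmax : ∀ v ∈ paraA n i, (csA n).length v ≤ (csA n).length w) (v : WA n) :
    v ∈ twistedConjClass (fun x => w₀ * x * w₀) (w * w₀) ↔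
      IsConj (blockRev i.castSucc) (permA n v * blockRev (Fin.last n)) := by
  have hinv : w₀ * w₀ = 1 := permA_injective n <| by
    rw [map_mul, permA_eq_blockRev_last hw₀, blockRev_mul_self, map_one]
  rw [mem_twistedConjClass_conj_iff hinv, ← isConj_map_iff (permA_bijective n), map_mul,
    permA_eq_blockRev_last hw₀, permA_eq_blockRev_castSucc hw hmax]

theorem one_mem_twistedConjClass_iff (hw₀ : ∀ v : WA n, (csA n).length v ≤ (csA n).length w₀)
    (hw : w ∈ paraA n i) (hmax : ∀ v ∈ paraA n i, (csA n).length v ≤ (csA n).length w) :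
    1 ∈ twistedConjClass (fun x => w₀ * x * w₀) (w * w₀) ↔ Even n ∨ Odd (i : ℕ) := by
  rw [mem_twistedConjClass_iff_isConj_blockRev hw₀ hw hmax, map_one, one_mul,
    isConj_blockRev_iff, Fin.val_castSucc, Fin.val_last]
  grind

theorem simple_mem_twistedConjClass_iff
    (hw₀ : ∀ v : WA n, (csA n).length v ≤ (csA n).length w₀) (hw : w ∈ paraA n i)
    (hmax : ∀ v ∈ paraA n i, (csA n).length v ≤ (csA n).length w) (hn : Odd n)
    (hi : Even (i : ℕ)) {j : Fin n} :
    (csA n).simple j ∈ twistedConjClass (fun x => w₀ * x * w₀) (w * w₀) ↔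
      2 * (j : ℕ) + 1 = n := by
  rw [mem_twistedConjClass_iff_isConj_blockRev hw₀ hw hmax, permA_simple]
  exact isConj_blockRev_adjSwap_mul_blockRev_last_iff hn hi

end LongestElements

/-- In type `Aₙ` with `σ₀(x) = w₀·x·w₀` the nontrivial diagram
automorphism, fix `1 ≤ i ≤ n`.  If `n` or `i` is even, the identity lies in the twisted
conjugacy class `O_{σ₀}(w_{i,0}·w₀)`; if `n` and `i` are both odd, the set of minimal
length elements of `O_{σ₀}(w_{i,0}·w₀)` is exactly `{s_{(n+1)/2}}`, so the minimal
length in this twisted class is `1`. -/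
theorem typeA_twisted_class_min_length (n i : ℕ) (hi1 : 1 ≤ i) (hin : i ≤ n)
    (w₀ : WA n) (hw₀ : ∀ v : WA n, (csA n).length v ≤ (csA n).length w₀)
    (wᵢ : WA n) (hwᵢ : wᵢ ∈ paraA n ⟨i - 1, by omega⟩)
    (hwᵢmax : ∀ v ∈ paraA n ⟨i - 1, by omega⟩, (csA n).length v ≤ (csA n).length wᵢ) :
    ((Even n ∨ Even i) →
      (1 : WA n) ∈ {v : WA n | ∃ x : WA n, v = x⁻¹ * (wᵢ * w₀) * (w₀ * x * w₀)}) ∧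
    (Odd n → Odd i →
      {v : WA n | (∃ x : WA n, v = x⁻¹ * (wᵢ * w₀) * (w₀ * x * w₀)) ∧
          ∀ v' : WA n, (∃ x : WA n, v' = x⁻¹ * (wᵢ * w₀) * (w₀ * x * w₀)) →
            (csA n).length v ≤ (csA n).length v'}
        = {(csA n).simple ⟨(n + 1) / 2 - 1, by omega⟩} ∧
      (csA n).length ((csA n).simple ⟨(n + 1) / 2 - 1, by omega⟩) = 1) := by
  have hmem_one := one_mem_twistedConjClass_iff hw₀ hwᵢ hwᵢmax
  refine ⟨fun h => hmem_one.2 (by grind), fun hn hi => ⟨?_, (csA n).length_simple _⟩⟩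
  refine setOf_minimal_length_eq_singleton_simple (csA n)
    (C := twistedConjClass (fun x => w₀ * x * w₀) (wᵢ * w₀)) ?_ fun j => ?_
  · rw [hmem_one]
    grind
  · rw [simple_mem_twistedConjClass_iff hw₀ hwᵢ hwᵢmax hn (by grind)]
    grind
end
end
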